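/- Let φ : ℝ² → ℝ be twice continuously differentiable and let H : ℝ³ → ℝ³ be continuously differentiable. Then for every y ∈ ℝ³: (curl H)(e(y)) = 𝕃(y) · [curl (z ↦ 𝕃(z)ᵀ H(e(z)))](y), i.e. the curl of H evaluated at e(y) equals the matrix 𝕃(y) applied to the curl (computed in the y-variables) of the vector field z ↦ 𝕃(z)ᵀ H(e(z)). -/

import Mathlib

/-!
Write `π y = (y₁, y₂)` and `pⱼ = ∂ⱼφ ∘ π`. Since `e(y) = y + φ(π y) e₃`, the chain rule reads
`∂ⱼ(f ∘ e) = (∂ⱼf) ∘ e + pⱼ (∂₃f) ∘ e`, where `p₃ = 0` (`pd_comp_emap`). The components of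
`𝕃ᵀ(H ∘ e)` are `Hⱼ ∘ e + pⱼ H₃ ∘ e`, which are therefore differentiated by the product rule
(`pd_add_mul`). Second derivatives of `φ` enter the curl only through `(∂₁p₂ - ∂₂p₁) H₃ ∘ e` in its
third component, and this vanishes by the symmetry of the Hessian (`pd2_comm`). The remaining terms
agree by algebra.
-/

/-- Partial derivative `∂ⱼ u` of a scalar function on ℝ³. -/
noncomputable def pd (j : Fin 3) (u : (Fin 3 → ℝ) → ℝ) (x : Fin 3 → ℝ) : ℝ :=
  fderiv ℝ u x (Pi.single j 1)

/-- Partial derivative `∂ⱼ φ` of a scalar function on ℝ². -/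
noncomputable def pd2 (j : Fin 2) (φ : (Fin 2 → ℝ) → ℝ) (y' : Fin 2 → ℝ) : ℝ :=
  fderiv ℝ φ y' (Pi.single j 1)

/-- Curl of a vector field on ℝ³. -/
noncomputable def curl3 (u : (Fin 3 → ℝ) → (Fin 3 → ℝ)) (x : Fin 3 → ℝ) : Fin 3 → ℝ :=
  ![pd 1 (fun y => u y 2) x - pd 2 (fun y => u y 1) x,
    pd 2 (fun y => u y 0) x - pd 0 (fun y => u y 2) x,
    pd 0 (fun y => u y 1) x - pd 1 (fun y => u y 0) x]

/-- The boundary-flattening map `e(y) = (y₁, y₂, y₃ + φ(y₁,y₂))`. -/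
noncomputable def emap (φ : (Fin 2 → ℝ) → ℝ) (y : Fin 3 → ℝ) : Fin 3 → ℝ :=
  ![y 0, y 1, y 2 + φ ![y 0, y 1]]

/-- The Jacobian matrix `𝕃(y)` of `e`, with rows `(1,0,0)`, `(0,1,0)`, `(∂₁φ, ∂₂φ, 1)`,
applied to a vector `v`. -/
noncomputable def Lmul (φ : (Fin 2 → ℝ) → ℝ) (y : Fin 3 → ℝ) (v : Fin 3 → ℝ) : Fin 3 → ℝ :=
  ![v 0, v 1, pd2 0 φ ![y 0, y 1] * v 0 + pd2 1 φ ![y 0, y 1] * v 1 + v 2]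

/-- The transpose `𝕃(y)ᵀ` applied to a vector `v`. -/
noncomputable def LTmul (φ : (Fin 2 → ℝ) → ℝ) (y : Fin 3 → ℝ) (v : Fin 3 → ℝ) : Fin 3 → ℝ :=
  ![v 0 + pd2 0 φ ![y 0, y 1] * v 2, v 1 + pd2 1 φ ![y 0, y 1] * v 2, v 2]

/-- The projection `ℝ³ → ℝ²`, `y ↦ (y₁, y₂)`, as a continuous linear map. -/
noncomputable def projL : (Fin 3 → ℝ) →L[ℝ] (Fin 2 → ℝ) :=
  ContinuousLinearMap.pi
    ![ContinuousLinearMap.proj (R := ℝ) (φ := fun _ : Fin 3 => ℝ) 0,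
      ContinuousLinearMap.proj (R := ℝ) (φ := fun _ : Fin 3 => ℝ) 1]

lemma projL_apply (z : Fin 3 → ℝ) : projL z = ![z 0, z 1] := by
  ext i; fin_cases i <;> simp [projL]

lemma hasFDerivAt_comp_proj {g : (Fin 2 → ℝ) → ℝ} (hg : Differentiable ℝ g) (y : Fin 3 → ℝ) :
    HasFDerivAt (fun z : Fin 3 → ℝ => g ![z 0, z 1])
      ((fderiv ℝ g ![y 0, y 1]).comp projL) y := by
  have h : HasFDerivAt (fun z => g (projL z)) ((fderiv ℝ g (projL y)).comp projL) y :=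
    (hg (projL y)).hasFDerivAt.comp y projL.hasFDerivAt
  simpa only [projL_apply] using h

/-- Coordinate form of the chain rule for the projection: a function of `(y₁, y₂)` has the
expected first two partial derivatives, and does not depend on `y₃`. -/
lemma fderiv_comp_projL_single (g : (Fin 2 → ℝ) → ℝ) (x : Fin 2 → ℝ) (j : Fin 3) :
    ((fderiv ℝ g x).comp projL) (Pi.single j 1) = ![pd2 0 g x, pd2 1 g x, 0] j := by
  have h0 : (![1, 0] : Fin 2 → ℝ) = Pi.single 0 1 := by
    ext i; fin_cases i <;> simp
  have h1 : (![0, 1] : Fin 2 → ℝ) = Pi.single 1 1 := by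
    ext i; fin_cases i <;> simp
  have h2 : (![0, 0] : Fin 2 → ℝ) = 0 := by
    ext i; fin_cases i <;> simp
  fin_cases j <;> simp [projL_apply, pd2, h0, h1, h2]

lemma pd_comp_proj {g : (Fin 2 → ℝ) → ℝ} (hg : Differentiable ℝ g) (y : Fin 3 → ℝ) (j : Fin 3) :
    pd j (fun z => g ![z 0, z 1]) y = ![pd2 0 g ![y 0, y 1], pd2 1 g ![y 0, y 1], 0] j := by
  rw [pd, (hasFDerivAt_comp_proj hg y).fderiv, fderiv_comp_projL_single]

lemma hasFDerivAt_emap {φ : (Fin 2 → ℝ) → ℝ} (hφ : Differentiable ℝ φ) (y : Fin 3 → ℝ) :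
    HasFDerivAt (emap φ)
      (ContinuousLinearMap.id ℝ (Fin 3 → ℝ) +
        ((fderiv ℝ φ ![y 0, y 1]).comp projL).smulRight (Pi.single 2 1)) y := by
  have he : emap φ = fun z => z + φ ![z 0, z 1] • (Pi.single 2 1 : Fin 3 → ℝ) := by
    ext z i; fin_cases i <;> simp [emap]
  rw [he]
  exact (hasFDerivAt_id y).add ((hasFDerivAt_comp_proj hφ y).smul_const _)

lemma pd_comp_emap {φ : (Fin 2 → ℝ) → ℝ} (hφ : Differentiable ℝ φ) {f : (Fin 3 → ℝ) → ℝ}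
    (hf : Differentiable ℝ f) (y : Fin 3 → ℝ) (j : Fin 3) :
    pd j (fun z => f (emap φ z)) y = pd j f (emap φ y) +
      ![pd2 0 φ ![y 0, y 1], pd2 1 φ ![y 0, y 1], 0] j * pd 2 f (emap φ y) := by
  have h := (hf (emap φ y)).hasFDerivAt.comp y (hasFDerivAt_emap hφ y)
  have h' : fderiv ℝ (fun z => f (emap φ z)) y = _ := h.fderiv
  rw [pd, h', ← fderiv_comp_projL_single]
  simp [pd]

lemma pd_add_mul {a b c : (Fin 3 → ℝ) → ℝ} {y : Fin 3 → ℝ} (ha : DifferentiableAt ℝ a y)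
    (hb : DifferentiableAt ℝ b y) (hc : DifferentiableAt ℝ c y) (j : Fin 3) :
    pd j (fun z => a z + b z * c z) y = pd j a y + (b y * pd j c y + c y * pd j b y) := by
  have h : fderiv ℝ (fun z => a z + b z * c z) y = _ :=
    (ha.hasFDerivAt.add (hb.hasFDerivAt.mul hc.hasFDerivAt)).fderiv
  rw [pd, h]
  simp [pd]

lemma differentiable_pd2 {φ : (Fin 2 → ℝ) → ℝ} (hφ : ContDiff ℝ 2 φ) (j : Fin 2) :
    Differentiable ℝ (pd2 j φ) := by
  have h : Differentiable ℝ (fderiv ℝ φ) :=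
    (hφ.fderiv_right (m := 1) (by norm_num)).differentiable (by norm_num)
  exact fun x => (h x).clm_apply (differentiableAt_const _)

/-- Symmetry of the second derivatives of a `C²` function on the plane. -/
lemma pd2_comm {φ : (Fin 2 → ℝ) → ℝ} (hφ : ContDiff ℝ 2 φ) (x : Fin 2 → ℝ) (i j : Fin 2) :
    pd2 i (pd2 j φ) x = pd2 j (pd2 i φ) x := by
  have h : Differentiable ℝ (fderiv ℝ φ) :=
    (hφ.fderiv_right (m := 1) (by norm_num)).differentiable (by norm_num)
  have key (i j : Fin 2) : pd2 i (pd2 j φ) x =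
      fderiv ℝ (fderiv ℝ φ) x (Pi.single i 1) (Pi.single j 1) := by
    have h' : fderiv ℝ (fun z => fderiv ℝ φ z (Pi.single j 1)) x = _ :=
      ((h x).hasFDerivAt.clm_apply (hasFDerivAt_const (Pi.single j 1) x)).fderiv
    change fderiv ℝ (fun z => fderiv ℝ φ z (Pi.single j 1)) x (Pi.single i 1) = _
    rw [h']
    simp
  rw [key, key]
  exact (hφ.contDiffAt.isSymmSndFDerivAt (by simp)).eq _ _

/-- Transformation of the curl under the boundary-flattening map:
`(curl H)(e(y)) = 𝕃(y) · [curl (z ↦ 𝕃(z)ᵀ H(e(z)))](y)`. -/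
theorem curl_transformation (φ : (Fin 2 → ℝ) → ℝ) (hφ : ContDiff ℝ 2 φ)
    (H : (Fin 3 → ℝ) → (Fin 3 → ℝ)) (hH : ContDiff ℝ 1 H) :
    ∀ y : Fin 3 → ℝ,
      curl3 H (emap φ y) = Lmul φ y (curl3 (fun z => LTmul φ z (H (emap φ z))) y) := by
  intro y
  have hφ1 : Differentiable ℝ φ := hφ.differentiable (by norm_num)
  have hHi (i : Fin 3) : Differentiable ℝ (fun x => H x i) :=
    differentiable_pi.mp (hH.differentiable (by norm_num)) i
  have hHe (i : Fin 3) : DifferentiableAt ℝ (fun z => H (emap φ z) i) y :=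
    (hHi i (emap φ y)).comp y (hasFDerivAt_emap hφ1 y).differentiableAt
  have hp (i : Fin 2) : DifferentiableAt ℝ (fun z : Fin 3 → ℝ => pd2 i φ ![z 0, z 1]) y :=
    (hasFDerivAt_comp_proj (differentiable_pd2 hφ i) y).differentiableAt
  have hc (i j : Fin 3) := pd_comp_emap hφ1 (hHi i) y j
  have hq (i : Fin 2) (j : Fin 3) := pd_comp_proj (differentiable_pd2 hφ i) y j
  have h0 (j : Fin 3) := pd_add_mul (hHe 0) (hp 0) (hHe 2) j
  have h1 (j : Fin 3) := pd_add_mul (hHe 1) (hp 1) (hHe 2) j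
  have hs := pd2_comm hφ ![y 0, y 1] 0 1
  ext i
  fin_cases i <;> simp [curl3, Lmul, LTmul, h0, h1, hc, hq, hs]
  ring
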